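/- Let Ω be a finite set, μ a probability measure on Ω, and A ⊆ Ω with p := μ(A) > 0. Let ν be a probability measure on Ω with ν({ω}) = (1−ε′)·μ({ω})/p for all ω ∈ A, where ε′ ∈ [0,1]. Let ξ : Ω → ℝ vanish off A and satisfy 0 ≤ ξ(ω) ≤ E_max for all ω, with E_max > 0. Let σ_max > 0 and suppose ε′ ≤ (σ_max/E_max)² and that the conditional variance satisfies Var_{μ(·|A)}(ξ) ≤ σ_max². Then Var_ν(ξ) ≤ Var_{μ(·|A)}(ξ) + σ_max² ≤ 2·σ_max². -/

import Mathlib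

/-! Write `S` and `m` for the second and first moments of `ξ` given `A`. Since `ξ` vanishes off `A`,
its moments under `ν` are `(1 - ε') S` and `(1 - ε') m`, so that
`Var_ν(ξ) - (S - m²) = ε' (m² - S) + ε' (1 - ε') m²`. The first term is nonpositive because
`m² ≤ S`, and the second is at most `ε' Emax² ≤ σmax²`. -/

open MeasureTheory ProbabilityTheory

/-- For functions vanishing off `A`, integrating against the amplified measure `ν` is `1 - ε'` times
integrating against the conditional measure; off `A` the measure `ν` is unconstrained. -/
lemma integral_amplified_eq {Ω : Type*} [Fintype Ω] [MeasurableSpace Ω]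
    [MeasurableSingletonClass Ω] (μ ν : Measure Ω) [IsProbabilityMeasure μ]
    [IsProbabilityMeasure ν] (A : Set Ω) (hA : MeasurableSet A)
    (ε' : ℝ) (hε' : ε' ≤ 1)
    (hν : ∀ ω ∈ A, ν {ω} = ENNReal.ofReal (1 - ε') * μ {ω} / μ A)
    (f : Ω → ℝ) (hf : ∀ ω ∉ A, f ω = 0) :
    ∫ ω, f ω ∂ν = (1 - ε') * ∫ ω, f ω ∂(μ[|A]) := by
  rw [integral_fintype Integrable.of_finite, integral_fintype Integrable.of_finite,
    Finset.mul_sum]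
  refine Finset.sum_congr rfl fun ω _ => ?_
  by_cases hω : ω ∈ A
  · have h1 : A ∩ {ω} = {ω} := by simpa using hω
    simp only [Measure.real, hν ω hω, cond_apply hA, h1, ENNReal.toReal_div, ENNReal.toReal_mul,
      ENNReal.toReal_inv, ENNReal.toReal_ofReal (sub_nonneg.2 hε'), smul_eq_mul]
    ring
  · simp [hf ω hω]

/-- In the setting of the amplified measure `ν` with `ν({ω}) = (1−ε′)·μ({ω})/μ(A)` on `A`, if
`0 ≤ ξ ≤ E_max`, `ε′ ≤ (σ_max/E_max)²` and the conditional variance of `ξ` given `A` is at most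
`σ_max²`, then `Var_ν(ξ) ≤ Var_{μ(·|A)}(ξ) + σ_max² ≤ 2·σ_max²`. -/
theorem variance_under_amplified_measure_le_twice_sigma_max_sq
    {Ω : Type*} [Fintype Ω] [MeasurableSpace Ω] [MeasurableSingletonClass Ω]
    (μ ν : Measure Ω) [IsProbabilityMeasure μ] [IsProbabilityMeasure ν]
    (A : Set Ω) (hA : MeasurableSet A) (hp : 0 < μ A)
    (ε' : ℝ) (hε' : ε' ∈ Set.Icc (0 : ℝ) 1)
    (hν : ∀ ω ∈ A, ν {ω} = ENNReal.ofReal (1 - ε') * μ {ω} / μ A)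
    (ξ : Ω → ℝ) (hξ : ∀ ω ∉ A, ξ ω = 0)
    (Emax : ℝ) (hEmax : 0 < Emax) (hξ0 : ∀ ω, 0 ≤ ξ ω) (hξE : ∀ ω, ξ ω ≤ Emax)
    (σmax : ℝ) (hσmax : 0 < σmax) (hε'σ : ε' ≤ (σmax / Emax) ^ 2)
    (hvar : (∫ ω, (ξ ω) ^ 2 ∂(μ[|A])) - (∫ ω, ξ ω ∂(μ[|A])) ^ 2 ≤ σmax ^ 2) :
    ((∫ ω, (ξ ω) ^ 2 ∂ν) - (∫ ω, ξ ω ∂ν) ^ 2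
        ≤ ((∫ ω, (ξ ω) ^ 2 ∂(μ[|A])) - (∫ ω, ξ ω ∂(μ[|A])) ^ 2) + σmax ^ 2)
      ∧ ((∫ ω, (ξ ω) ^ 2 ∂(μ[|A])) - (∫ ω, ξ ω ∂(μ[|A])) ^ 2) + σmax ^ 2
          ≤ 2 * σmax ^ 2 := by
  have := cond_isProbabilityMeasure hp.ne'
  obtain ⟨h0, h1⟩ := hε'
  refine ⟨?_, by linarith⟩
  rw [integral_amplified_eq μ ν A hA ε' h1 hν ξ hξ,
    integral_amplified_eq μ ν A hA ε' h1 hν (fun ω => ξ ω ^ 2) (fun ω hω => by simp [hξ ω hω])]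
  have hJ : 0 ≤ (∫ ω, ξ ω ^ 2 ∂(μ[|A])) - (∫ ω, ξ ω ∂(μ[|A])) ^ 2 := by
    have h := variance_nonneg ξ (μ[|A])
    rw [variance_eq_sub MemLp.of_discrete] at h
    simpa using h
  have hm0 : 0 ≤ ∫ ω, ξ ω ∂(μ[|A]) := integral_nonneg hξ0
  have hmE : ∫ ω, ξ ω ∂(μ[|A]) ≤ Emax := by
    have h := integral_mono (μ := μ[|A]) (f := ξ) (g := fun _ => Emax)
      Integrable.of_finite Integrable.of_finite hξE
    simpa using h
  generalize (∫ ω, ξ ω ^ 2 ∂(μ[|A])) = S at *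
  generalize (∫ ω, ξ ω ∂(μ[|A])) = m at *
  have hE : ε' * Emax ^ 2 ≤ σmax ^ 2 := by
    rwa [div_pow, le_div_iff₀ (by positivity)] at hε'σ
  have hm2 : m ^ 2 ≤ Emax ^ 2 := pow_le_pow_left₀ hm0 hmE 2
  have a1 := mul_nonneg h0 hJ
  have a2 := mul_le_mul_of_nonneg_left hm2 h0
  have a3 : 0 ≤ ε' ^ 2 * m ^ 2 := by positivity
  nlinarith
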